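/- arXiv:2307.14600 — 2 statements merged into one kernel-verified Lean document; each statement's English description precedes it below -/
import Mathlib

section
/- Suppose μ is a non-degenerate probability measure on ℝ satisfying E_μ[exp(λ|X|^p)] < ∞ for all λ > 0 with some p ∈ [v,∞], and W : [0,1]² → ℝ is symmetric measurable with ‖W‖_{L^{qΔ}([0,1]²)} < ∞ for some q > 1 with 1/p + 1/q ≤ 1. If θ ≠ 0 and the function T[Sym[W]] is not Lebesgue-a.e. constant on [0,1], then no maximizer of the variational problem sup{ θ G_W(f) − ∫₀¹ γ(β(f(x))) dx : f ∈ L, ∫₀¹ γ(β(f(x))) dx < ∞ } is a.e. equal to a non-zero constant. -/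
/-!
Let the constant `c ≠ 0` be optimal (the objective only depends on the a.e. class of `f`).

If `c ∈ N`, perturb to `c + ε 1_A` for a measurable `A`. On `N` the entropy `γ ∘ β` is
differentiable by the inverse function theorem, since `α'' > 0` (`differentiableAt_gb`). The
functional `G_W` has derivative `c^(v-1) ∑ₐ ∫ (∏ W) 1_A(z_a) = v c^(v-1) ∫_A T[Sym[W]]` in that
direction (`hasDerivAt_GW`, `card_mul_integral_TSymW_mul`). So optimality gives
`θ v c^(v-1) ∫_A T[Sym[W]] = (γ ∘ β)'(c) |A|` for every `A`, and `T[Sym[W]]` is a.e. constant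
(`TSymW_ae_const_of_mem_Ndom`).

If `c ∉ N`, then `c` is an endpoint of the interval `N` and, its cost being finite, an atom of `μ`.
From `α(s) ≥ s c + log μ{c}` one gets that the cost of `c` exceeds the cost of `t = α'(s)` by at
least `s (c - t)` (`gb_endpoint`), whereas `G_W` is Lipschitz along constants; a large `|s|` of the
right sign makes the constant `t` strictly better (`endpoint_not_max`).

Everything rests on the integrability of `∏ W(x_a, x_b)` over the cube, which follows from Finner's
generalization of Hölder's inequality (`finner`) because `W` has a moment of order `Δ`.
-/


open MeasureTheory Filter Set
open scoped ENNReal NNReal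

noncomputable section

namespace GibbsMulti

/-- The log moment generating function `α(θ) = log ∫ e^{θx} dμ(x)`. -/
def cgf (μ : Measure ℝ) (θ : ℝ) : ℝ := Real.log (∫ x, Real.exp (θ * x) ∂μ)

/-- `α'`, the derivative of the log-mgf. -/
def cgf' (μ : Measure ℝ) : ℝ → ℝ := deriv (cgf μ)

/-- `N = α'(ℝ)`. -/
def Ndom (μ : Measure ℝ) : Set ℝ := Set.range (cgf' μ)

/-- `β`, the inverse of `α'` on `N`. -/
def betaInv (μ : Measure ℝ) : ℝ → ℝ := Function.invFun (cgf' μ)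

/-- `γ(θ) = θ α'(θ) − α(θ)`. -/
def gammaFn (μ : Measure ℝ) (θ : ℝ) : ℝ := θ * cgf' μ θ - cgf μ θ

open Classical in
/-- The extended function `γ∘β : cl(N) → [0,∞]`, with values `D(δ_t‖μ) = −log μ({t})`
at the endpoints of `N` (which is `∞` when `μ({t}) = 0`). -/
def gb (μ : Measure ℝ) (t : ℝ) : ℝ≥0∞ :=
  if t ∈ Ndom μ then ENNReal.ofReal (gammaFn μ (betaInv μ t))
  else if μ {t} = 0 then ⊤ else ENNReal.ofReal (- Real.log (μ {t}).toReal)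

/-- `μ` is non-degenerate. -/
def Nondeg (μ : Measure ℝ) : Prop := ∀ c : ℝ, μ ≠ Measure.dirac c

/-- Tail condition with (finite) exponent `p`: `E_μ[exp(λ |X|^p)] < ∞` for every `λ > 0`. -/
def TailCond (μ : Measure ℝ) (p : ℝ) : Prop :=
  ∀ l : ℝ, 0 < l → Integrable (fun x => Real.exp (l * |x| ^ p)) μ

/-- `μ` is stochastically non-negative. -/
def StochNonneg (μ : Measure ℝ) : Prop :=
  ∀ t : ℝ, 0 < t → -t ∈ Ndom μ →
    t ∈ Ndom μ ∧ gammaFn μ (betaInv μ t) ≤ gammaFn μ (betaInv μ (-t))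

/-- The uniform probability measure on the cube `[0,1]^v`. -/
def unifCube (v : ℕ) : Measure (Fin v → ℝ) :=
  Measure.pi fun _ => volume.restrict (Icc (0:ℝ) 1)

/-- The uniform probability measure on `[0,1]²`. -/
def unifSq : Measure (ℝ × ℝ) :=
  (volume.restrict (Icc (0:ℝ) 1)).prod (volume.restrict (Icc (0:ℝ) 1))

variable {v : ℕ}

/-- The maximum degree of the graph on `[v]` with edge set `E`. -/
def maxDeg (E : Finset (Fin v × Fin v)) : ℕ :=
  Finset.univ.sup fun a => (E.filter fun e => e.1 = a ∨ e.2 = a).card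

/-- `∏_{(a,b) ∈ E(H)} W(x_a, x_b)`. -/
def edgeProd (E : Finset (Fin v × Fin v)) (W : ℝ → ℝ → ℝ) (x : Fin v → ℝ) : ℝ :=
  ∏ e ∈ E, W (x e.1) (x e.2)

/-- `Sym[W](x₁,…,x_v)`. -/
def symW (E : Finset (Fin v × Fin v)) (W : ℝ → ℝ → ℝ) (x : Fin v → ℝ) : ℝ :=
  (v.factorial : ℝ)⁻¹ * ∑ σ : Equiv.Perm (Fin v), ∏ e ∈ E, W (x (σ e.1)) (x (σ e.2))

/-- `T[Sym[W]](x) = ∫_{[0,1]^{v-1}} Sym[W](x, x₂, …, x_v) dx₂⋯dx_v`. -/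
def TSymW [NeZero v] (E : Finset (Fin v × Fin v)) (W : ℝ → ℝ → ℝ) (x : ℝ) : ℝ :=
  ∫ z, symW E W (Function.update z 0 x) ∂(unifCube v)

/-- `∫_{[0,1]^{v-1}} Sym[W](x, x₂, …, x_v) ∏_{a=2}^v f(x_a) dx₂⋯dx_v`. -/
def symWf [NeZero v] (E : Finset (Fin v × Fin v)) (W : ℝ → ℝ → ℝ) (f : ℝ → ℝ) (x : ℝ) : ℝ :=
  ∫ z, symW E W (Function.update z 0 x) * ∏ a ∈ Finset.univ.erase (0 : Fin v), f (z a)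
    ∂(unifCube v)

/-- `G_W(f)`. -/
def GW (E : Finset (Fin v × Fin v)) (W : ℝ → ℝ → ℝ) (f : ℝ → ℝ) : ℝ :=
  ∫ z, edgeProd E W z * ∏ a, f (z a) ∂(unifCube v)

/-- Membership in the class `𝓛` of measurable functions `[0,1] → cl(N)` with
`∫₀¹ |f|^p < ∞`. -/
def MemL (μ : Measure ℝ) (p : ℝ) (f : ℝ → ℝ) : Prop :=
  Measurable f ∧ (∀ x ∈ Icc (0:ℝ) 1, f x ∈ closure (Ndom μ)) ∧
    (∫⁻ x in Icc (0:ℝ) 1, ENNReal.ofReal (|f x| ^ p)) < ⊤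

/-- The objective functional `θ G_W(f) − ∫₀¹ γ(β(f(x))) dx`. -/
def objective (μ : Measure ℝ) (E : Finset (Fin v × Fin v)) (W : ℝ → ℝ → ℝ) (θ : ℝ)
    (f : ℝ → ℝ) : ℝ :=
  θ * GW E W f - (∫⁻ x in Icc (0:ℝ) 1, gb μ (f x)).toReal

/-- `f` is a maximizer of the variational problem
`sup { θ G_W(f) − ∫₀¹ γ(β(f)) : f ∈ 𝓛, ∫₀¹ γ(β(f)) < ∞ }`. -/
def IsMaximizer (μ : Measure ℝ) (p : ℝ) (E : Finset (Fin v × Fin v)) (W : ℝ → ℝ → ℝ)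
    (θ : ℝ) (f : ℝ → ℝ) : Prop :=
  MemL μ p f ∧ (∫⁻ x in Icc (0:ℝ) 1, gb μ (f x)) < ⊤ ∧
    ∀ g : ℝ → ℝ, MemL μ p g → (∫⁻ x in Icc (0:ℝ) 1, gb μ (g x)) < ⊤ →
      objective μ E W θ g ≤ objective μ E W θ f

/-! ### The log moment generating function and the entropy -/

lemma integrable_exp_of_tail (μ : Measure ℝ) [IsProbabilityMeasure μ] {p : ℝ} (hp : 1 ≤ p)
    (h : TailCond μ p) (t : ℝ) : Integrable (fun x => Real.exp (t * x)) μ := by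
  have h1 := (h (|t| + 1) (by positivity)).const_mul (Real.exp (|t| + 1))
  refine h1.mono' (by fun_prop) (Eventually.of_forall fun x => ?_)
  rw [Real.norm_eq_abs, abs_of_pos (Real.exp_pos _), ← Real.exp_add, Real.exp_le_exp]
  have hx : |x| ≤ 1 + |x| ^ p := by
    rcases le_total |x| 1 with hx | hx
    · have := Real.rpow_nonneg (abs_nonneg x) p
      linarith
    · have := Real.rpow_le_rpow_of_exponent_le hx hp
      rw [Real.rpow_one] at this
      linarith
  calc t * x ≤ |t| * |x| := by rw [← abs_mul]; exact le_abs_self _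
    _ ≤ (|t| + 1) * (1 + |x| ^ p) := by gcongr; linarith
    _ = _ := by ring

lemma cgf_eq (μ : Measure ℝ) : cgf μ = ProbabilityTheory.cgf id μ := rfl

lemma mem_interior_expSet {μ : Measure ℝ} (h : ∀ t, Integrable (fun x => Real.exp (t * x)) μ)
    (t : ℝ) : t ∈ interior (ProbabilityTheory.integrableExpSet id μ) := by
  have : ProbabilityTheory.integrableExpSet id μ = univ := by
    ext s; simpa [ProbabilityTheory.integrableExpSet] using h s
  simp [this]

lemma analyticAt_cgf {μ : Measure ℝ} (h : ∀ t, Integrable (fun x => Real.exp (t * x)) μ)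
    (t : ℝ) : AnalyticAt ℝ (cgf μ) t :=
  ProbabilityTheory.analyticAt_cgf (mem_interior_expSet h t)

/-- The second derivative of the log-mgf is the variance of a tilted measure, hence positive
unless `μ` is a point mass. -/
lemma deriv_cgf'_pos {μ : Measure ℝ} [IsProbabilityMeasure μ] (hND : Nondeg μ)
    (h : ∀ t, Integrable (fun x => Real.exp (t * x)) μ) (t : ℝ) : 0 < deriv (cgf' μ) t := by
  have h2 := ProbabilityTheory.iteratedDeriv_two_cgf_eq_integral (mem_interior_expSet h t)
  rw [iteratedDeriv_succ, iteratedDeriv_one] at h2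
  have hint : Integrable (fun x : ℝ => (x - deriv (cgf μ) t) ^ 2 * Real.exp (t * x)) μ := by
    have i2 := ProbabilityTheory.integrable_pow_mul_exp_of_mem_interior_integrableExpSet
      (mem_interior_expSet h t) 2
    have i1 := ProbabilityTheory.integrable_pow_mul_exp_of_mem_interior_integrableExpSet
      (mem_interior_expSet h t) 1
    have := (i2.sub (i1.const_mul (2 * deriv (cgf μ) t))).add
      ((h t).const_mul (deriv (cgf μ) t ^ 2))
    refine this.congr (Eventually.of_forall fun x => ?_)
    simp only [id, Pi.add_apply, Pi.sub_apply]
    ring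
  have hnn : 0 ≤ fun x : ℝ => (x - deriv (cgf μ) t) ^ 2 * Real.exp (t * x) := fun x => by
    simp only [Pi.zero_apply]; positivity
  change deriv (cgf' μ) t = _ at h2
  rw [h2]
  refine div_pos ?_ (ProbabilityTheory.mgf_pos (h t))
  refine lt_of_le_of_ne (integral_nonneg hnn) fun h0 => ?_
  have h3 := (integral_eq_zero_iff_of_nonneg hnn hint).1 h0.symm
  apply hND (deriv (cgf μ) t)
  have h4 : (id : ℝ → ℝ) =ᵐ[μ] fun _ => deriv (cgf μ) t := by
    filter_upwards [h3] with x hx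
    simp only [Pi.zero_apply, mul_eq_zero, Real.exp_ne_zero, or_false] at hx
    have := pow_eq_zero_iff (two_ne_zero) |>.1 hx
    simp only [id]; linarith
  calc μ = μ.map id := Measure.map_id.symm
    _ = _ := by rw [Measure.map_congr h4, Measure.map_const]; simp

lemma strictMono_cgf' {μ : Measure ℝ} [IsProbabilityMeasure μ] (hND : Nondeg μ)
    (h : ∀ t, Integrable (fun x => Real.exp (t * x)) μ) : StrictMono (cgf' μ) :=
  strictMono_of_deriv_pos (deriv_cgf'_pos hND h)

/-- Tangent line inequality for the convex function `cgf μ` at `s`, evaluated at `0`. -/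
lemma gammaFn_nonneg {μ : Measure ℝ} [IsProbabilityMeasure μ] (hND : Nondeg μ)
    (h : ∀ t, Integrable (fun x => Real.exp (t * x)) μ) (s : ℝ) : 0 ≤ gammaFn μ s := by
  have hm := strictMono_cgf' hND h
  have hd : Differentiable ℝ (cgf μ) := fun t => (analyticAt_cgf h t).differentiableAt
  have hz : cgf μ 0 = 0 := by simp [cgf]
  have hc : ConvexOn ℝ univ (cgf μ) := hm.monotone.convexOn_univ_of_deriv hd
  unfold gammaFn cgf'
  rcases lt_trichotomy s 0 with hs | hs | hs
  · have := hc.deriv_le_slope (mem_univ s) (mem_univ 0) hs (hd s)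
    rw [slope_def_field, hz, le_div_iff₀ (by linarith)] at this
    linarith
  · simp [hs, hz]
  · have := hc.slope_le_deriv (mem_univ 0) (mem_univ s) hs (hd s)
    rw [slope_def_field, hz, div_le_iff₀ (by linarith)] at this
    linarith

lemma betaInv_cgf' {μ : Measure ℝ} (hm : StrictMono (cgf' μ)) (s : ℝ) :
    betaInv μ (cgf' μ s) = s :=
  Function.leftInverse_invFun hm.injective s

lemma toReal_gb {μ : Measure ℝ} [IsProbabilityMeasure μ] (hND : Nondeg μ)
    (h : ∀ t, Integrable (fun x => Real.exp (t * x)) μ) {t : ℝ} (ht : t ∈ Ndom μ) :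
    (gb μ t).toReal = gammaFn μ (betaInv μ t) := by
  rw [gb, if_pos ht, ENNReal.toReal_ofReal (gammaFn_nonneg hND h _)]

lemma gb_ne_top {μ : Measure ℝ} {t : ℝ} (ht : t ∈ Ndom μ) : gb μ t ≠ ⊤ := by
  rw [gb, if_pos ht]; exact ENNReal.ofReal_ne_top

lemma Ndom_mem_nhds {μ : Measure ℝ} [IsProbabilityMeasure μ] (hND : Nondeg μ)
    (h : ∀ t, Integrable (fun x => Real.exp (t * x)) μ) {c : ℝ} (hc : c ∈ Ndom μ) :
    Ndom μ ∈ nhds c := by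
  obtain ⟨s, rfl⟩ := hc
  have hs : HasStrictDerivAt (cgf' μ) (deriv (cgf' μ) s) s :=
    (analyticAt_cgf h s).deriv.hasStrictDerivAt
  have hs' := hs.hasStrictFDerivAt_equiv (deriv_cgf'_pos hND h s).ne'
  filter_upwards [hs'.eventually_right_inverse] with y hy
  exact ⟨_, hy⟩

/-- By the inverse function theorem `β` is differentiable on `N`, hence so is `γ ∘ β`. -/
lemma differentiableAt_gb {μ : Measure ℝ} [IsProbabilityMeasure μ] (hND : Nondeg μ)
    (h : ∀ t, Integrable (fun x => Real.exp (t * x)) μ) {c : ℝ} (hc : c ∈ Ndom μ) :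
    DifferentiableAt ℝ (fun t => (gb μ t).toReal) c := by
  have hm := strictMono_cgf' hND h
  have hN := Ndom_mem_nhds hND h hc
  obtain ⟨s, rfl⟩ := hc
  have hs : HasStrictDerivAt (cgf' μ) (deriv (cgf' μ) s) s :=
    (analyticAt_cgf h s).deriv.hasStrictDerivAt
  have hs' := hs.hasStrictFDerivAt_equiv (deriv_cgf'_pos hND h s).ne'
  have hβ : DifferentiableAt ℝ (betaInv μ) (cgf' μ s) := by
    have h1 := hs'.to_localInverse.hasFDerivAt.differentiableAt
    refine h1.congr_of_eventuallyEq ?_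
    filter_upwards [hs'.eventually_right_inverse] with y hy
    conv_lhs => rw [← hy]
    exact betaInv_cgf' hm _
  have hγ : DifferentiableAt ℝ (gammaFn μ) (betaInv μ (cgf' μ s)) := by
    unfold gammaFn
    refine (differentiableAt_id.mul ?_).sub (analyticAt_cgf h _).differentiableAt
    exact (analyticAt_cgf h _).deriv.differentiableAt
  refine (hγ.comp _ hβ).congr_of_eventuallyEq ?_
  filter_upwards [hN] with y hy
  exact toReal_gb hND h hy

/-- If `c` is an atom of `μ`, the entropy cost `-log μ {c}` of `c` exceeds the cost of
`t = α'(s)` by at least `s (c - t)`: the slope of `γ ∘ β` blows up at an endpoint of `N`. -/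
lemma gb_endpoint {μ : Measure ℝ} [IsProbabilityMeasure μ] (hND : Nondeg μ)
    (h : ∀ t, Integrable (fun x => Real.exp (t * x)) μ) {c : ℝ} (hc : c ∉ Ndom μ)
    (hfin : gb μ c ≠ ⊤) (s : ℝ) :
    s * (c - cgf' μ s) ≤ (gb μ c).toReal - (gb μ (cgf' μ s)).toReal := by
  have hμc : μ {c} ≠ 0 := by
    intro h0; apply hfin; rw [gb, if_neg hc, if_pos h0]
  have hpos : 0 < (μ {c}).toReal := ENNReal.toReal_pos hμc (measure_ne_top _ _)
  have hle1 : (μ {c}).toReal ≤ 1 :=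
    ENNReal.toReal_le_of_le_ofReal zero_le_one (by simpa using prob_le_one)
  rw [toReal_gb hND h ⟨s, rfl⟩, betaInv_cgf' (strictMono_cgf' hND h), gb, if_neg hc, if_neg hμc,
    ENNReal.toReal_ofReal (by have := Real.log_nonpos hpos.le hle1; linarith), gammaFn]
  have key : s * c + Real.log (μ {c}).toReal ≤ cgf μ s := by
    rw [cgf, ← Real.log_exp (s * c), ← Real.log_mul (Real.exp_ne_zero _) hpos.ne']
    apply Real.log_le_log (by positivity)
    calc Real.exp (s * c) * (μ {c}).toReal = ∫ x in {c}, Real.exp (s * x) ∂μ := by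
          simp [mul_comm]
      _ ≤ _ := setIntegral_le_integral (h s) (Eventually.of_forall fun x => (Real.exp_pos _).le)
  linarith

/-! ### Integrability of the edge product -/

instance instProbUnif : IsProbabilityMeasure (volume.restrict (Icc (0:ℝ) 1)) :=
  ⟨by simp⟩

instance instProbCube (v : ℕ) : IsProbabilityMeasure (unifCube v) := by
  unfold unifCube; infer_instance

/-- **Finner's inequality** for marginals: if every coordinate `a` influences at most `d` of the
functions `F i`, then `∫ ∏ F i ≤ ∏ (∫ (F i) ^ d) ^ (1/d)`, where the integrals are taken over the
coordinates in `s`. Coordinates are integrated one at a time with Hölder's inequality. -/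
lemma finner {ι δ : Type*} [DecidableEq δ] (I : Finset ι)
    (μ : δ → Measure ℝ) [∀ i, IsProbabilityMeasure (μ i)]
    (F : ι → (δ → ℝ) → ℝ≥0∞) (hF : ∀ i, Measurable (F i))
    (S : ι → Finset δ) (hS : ∀ i, ∀ a ∉ S i, ∀ x y, F i (Function.update x a y) = F i x)
    (d : ℕ) (hd : 0 < d) (hdeg : ∀ a, (I.filter fun i => a ∈ S i).card ≤ d)
    (s : Finset δ) (x : δ → ℝ) :
    lmarginal μ s (fun z => ∏ i ∈ I, F i z) x ≤
      ∏ i ∈ I, (lmarginal μ s (fun z => F i z ^ d) x) ^ (1 / d : ℝ) := by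
  have hd0 : (0:ℝ) < d := by exact_mod_cast hd
  induction s using Finset.induction_on generalizing x with
  | empty =>
    simp only [lmarginal_empty]
    refine (Finset.prod_congr rfl fun i _ => ?_).le
    rw [← ENNReal.rpow_natCast, ← ENNReal.rpow_mul, mul_one_div_cancel hd0.ne', ENNReal.rpow_one]
  | insert a s ha ih =>
    have hprod : Measurable fun z => ∏ i ∈ I, F i z := Finset.measurable_prod _ fun i _ => hF i
    have hpow : ∀ i, Measurable fun z => F i z ^ d := fun i => (hF i).pow_const d
    have hH : ∀ i, Measurable fun y =>
        lmarginal μ s (fun z => F i z ^ d) (Function.update x a y) := fun i =>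
      ((hpow i).lmarginal μ).comp (measurable_update x)
    rw [lmarginal_insert _ hprod ha]
    refine (lintegral_mono fun y => ih (Function.update x a y)).trans ?_
    -- functions not involving the coordinate `a` are constants for the integral over it
    have hconst : ∀ i, a ∉ S i → ∀ y,
        lmarginal μ s (fun z => F i z ^ d) (Function.update x a y) =
          lmarginal μ s (fun z => F i z ^ d) x := by
      intro i hi y
      rw [lmarginal_update_of_notMem (hpow i) ha]
      congr 1
      funext z
      simp only [Function.comp]
      rw [hS i a hi]
    simp_rw [fun i => lmarginal_insert (μ := μ) _ (hpow i) ha]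
    rw [← Finset.prod_filter_mul_prod_filter_not I (fun i => a ∈ S i)
      (fun i => (∫⁻ y, lmarginal μ s (fun z => F i z ^ d) (Function.update x a y) ∂μ a) ^ (1/d:ℝ))]
    have e2 : ∏ i ∈ I with a ∉ S i,
        (∫⁻ y, lmarginal μ s (fun z => F i z ^ d) (Function.update x a y) ∂μ a) ^ (1/d:ℝ)
        = ∏ i ∈ I with a ∉ S i, (lmarginal μ s (fun z => F i z ^ d) x) ^ (1/d:ℝ) := by
      refine Finset.prod_congr rfl fun i hi => ?_
      simp only [hconst i (Finset.mem_filter.1 hi).2]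
      simp
    rw [e2]
    have e1 : ∀ y, ∏ i ∈ I,
        (lmarginal μ s (fun z => F i z ^ d) (Function.update x a y)) ^ (1/d:ℝ)
        = (∏ i ∈ I with a ∈ S i,
            (lmarginal μ s (fun z => F i z ^ d) (Function.update x a y)) ^ (1/d:ℝ)) *
          ∏ i ∈ I with a ∉ S i, (lmarginal μ s (fun z => F i z ^ d) x) ^ (1/d:ℝ) := by
      intro y
      rw [← Finset.prod_filter_mul_prod_filter_not I (fun i => a ∈ S i)]
      congr 1
      refine Finset.prod_congr rfl fun i hi => ?_
      rw [hconst i (Finset.mem_filter.1 hi).2]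
    simp_rw [e1]
    rw [lintegral_mul_const]
    swap
    · exact Finset.measurable_prod _ fun i _ => (hH i).pow_const _
    gcongr
    -- Hölder, with the constant function `1` carrying the missing exponent
    have hold := ENNReal.lintegral_mul_prod_norm_pow_le (μ := μ a) (I.filter fun i => a ∈ S i)
      (g := fun _ => 1)
      (f := fun i y => lmarginal μ s (fun z => F i z ^ d) (Function.update x a y))
      aemeasurable_const (fun i _ => (hH i).aemeasurable)
      (1 - (I.filter fun i => a ∈ S i).card * (1/d:ℝ)) (p := fun _ => (1/d:ℝ))
      (by simp) (by
        have : ((I.filter fun i => a ∈ S i).card : ℝ) ≤ d := by exact_mod_cast hdeg a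
        rw [mul_one_div, sub_nonneg, div_le_one hd0]; exact this)
      (fun _ _ => by positivity)
    simpa using hold

lemma measurable_W_pair {v : ℕ} {W : ℝ → ℝ → ℝ} (hWm : Measurable fun z : ℝ × ℝ => W z.1 z.2)
    (a b : Fin v) : Measurable fun z : Fin v → ℝ => W (z a) (z b) := by
  have hp : Measurable fun z : Fin v → ℝ => (z a, z b) :=
    (measurable_pi_apply a).prodMk (measurable_pi_apply b)
  exact hWm.comp hp

lemma measurable_edgeProd {v : ℕ} (E : Finset (Fin v × Fin v)) (W : ℝ → ℝ → ℝ)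
    (hWm : Measurable fun z : ℝ × ℝ => W z.1 z.2) : Measurable (edgeProd E W) := by
  unfold edgeProd
  exact Finset.measurable_prod _ fun e _ => measurable_W_pair hWm e.1 e.2

/-- Any two distinct coordinates of a uniform point of the cube form a uniform point of the
square. -/
lemma measurePreserving_pair {v : ℕ} {a b : Fin v} (hab : a ≠ b) :
    MeasurePreserving (fun z : Fin v → ℝ => (z a, z b)) (unifCube v) unifSq := by
  have hm : Measurable (fun z : Fin v → ℝ => (z a, z b)) :=
    (measurable_pi_apply a).prodMk (measurable_pi_apply b)
  refine ⟨hm, ?_⟩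
  unfold unifSq
  refine (Measure.prod_eq fun s t hs ht => ?_).symm
  rw [Measure.map_apply hm (hs.prod ht)]
  have : (fun z : Fin v → ℝ => (z a, z b)) ⁻¹' s ×ˢ t =
      univ.pi fun i => if i = a then s else if i = b then t else univ := by
    ext z
    simp only [mem_preimage, mem_prod, Set.mem_pi, mem_univ, true_imp_iff]
    constructor
    · rintro ⟨h1, h2⟩ i
      split_ifs with h h'
      · exact h ▸ h1
      · exact h' ▸ h2
      · trivial
    · intro h
      have ha := h a
      have hb := h b
      rw [if_pos rfl] at ha
      rw [if_neg hab.symm, if_pos rfl] at hb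
      exact ⟨ha, hb⟩
  rw [this, unifCube, Measure.pi_pi, ← Finset.mul_prod_erase _ _ (Finset.mem_univ a),
    ← Finset.mul_prod_erase _ _ (Finset.mem_erase.2 ⟨hab.symm, Finset.mem_univ b⟩),
    Finset.prod_eq_one]
  · rw [if_pos rfl, if_neg hab.symm, if_pos rfl, mul_one]
  · intro i hi
    simp only [Finset.mem_erase, Finset.mem_univ, and_true] at hi
    rw [if_neg hi.2, if_neg hi.1]
    exact measure_univ

/-- The integrability of the edge product follows from Finner's inequality, as every vertex lies
on at most `maxDeg E` edges and `W` has a finite moment of order `maxDeg E`. -/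
lemma integrable_edgeProd {v : ℕ} (E : Finset (Fin v × Fin v)) (hE : ∀ e ∈ E, e.1 ≠ e.2)
    (q : ℝ) (hq : 1 < q) (W : ℝ → ℝ → ℝ) (hWm : Measurable fun z : ℝ × ℝ => W z.1 z.2)
    (hWnorm : eLpNorm (fun z : ℝ × ℝ => W z.1 z.2)
      (ENNReal.ofReal (q * (maxDeg E : ℝ))) unifSq < ⊤) :
    Integrable (edgeProd E W) (unifCube v) := by
  have hdeg : ∀ a : Fin v, (E.filter fun e => a ∈ ({e.1, e.2} : Finset (Fin v))).card
      ≤ maxDeg E := by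
    intro a
    refine le_trans (Finset.card_le_card ?_) (Finset.le_sup
      (f := fun a => (E.filter fun e => e.1 = a ∨ e.2 = a).card) (Finset.mem_univ a))
    intro e he
    simp only [Finset.mem_filter, Finset.mem_insert, Finset.mem_singleton] at he ⊢
    exact ⟨he.1, he.2.imp Eq.symm Eq.symm⟩
  rcases E.eq_empty_or_nonempty with rfl | ⟨e₀, he₀⟩
  · have : edgeProd (∅ : Finset (Fin v × Fin v)) W = fun _ => 1 := by funext z; simp [edgeProd]
    rw [this]; exact integrable_const _
  have hd : 0 < maxDeg E :=
    (Finset.card_pos.2 ⟨e₀, by simp [he₀]⟩).trans_le (hdeg e₀.1)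
  set d := maxDeg E
  refine ⟨(measurable_edgeProd E W hWm).aestronglyMeasurable, ?_⟩
  have hWe : ∀ e : Fin v × Fin v, Measurable fun z : Fin v → ℝ => ‖W (z e.1) (z e.2)‖ₑ :=
    fun e => (measurable_W_pair hWm e.1 e.2).enorm
  have hfin := finner E (fun _ : Fin v => volume.restrict (Icc (0:ℝ) 1))
    (fun e z => ‖W (z e.1) (z e.2)‖ₑ) hWe (fun e => {e.1, e.2})
    (by
      intro e a ha x y
      simp only [Finset.mem_insert, Finset.mem_singleton, not_or] at ha
      simp only [Function.update_of_ne (Ne.symm ha.1), Function.update_of_ne (Ne.symm ha.2)])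
    d hd hdeg Finset.univ 0
  simp only [lmarginal_univ] at hfin
  have hsq : ∫⁻ w, ‖W w.1 w.2‖ₑ ^ d ∂unifSq < ⊤ := by
    have : IsProbabilityMeasure unifSq := by unfold unifSq; infer_instance
    have h1 : eLpNorm (fun z : ℝ × ℝ => W z.1 z.2) d unifSq < ⊤ := by
      refine lt_of_le_of_lt (eLpNorm_le_eLpNorm_of_exponent_le ?_ hWm.aestronglyMeasurable) hWnorm
      rw [← ENNReal.ofReal_natCast]
      apply ENNReal.ofReal_le_ofReal
      have : (0:ℝ) ≤ d := Nat.cast_nonneg _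
      nlinarith
    have h2 := lintegral_rpow_enorm_lt_top_of_eLpNorm_lt_top (by exact_mod_cast hd.ne')
      (ENNReal.natCast_ne_top d) h1
    simpa using h2
  unfold HasFiniteIntegral
  have : ∀ z, ‖edgeProd E W z‖ₑ = ∏ e ∈ E, ‖W (z e.1) (z e.2)‖ₑ := fun z => by
    simp only [edgeProd, enorm_eq_nnnorm, nnnorm_prod, ENNReal.ofNNReal_finsetProd]
  simp_rw [this]
  refine lt_of_le_of_lt hfin (ENNReal.prod_lt_top fun e he => ?_)
  refine ENNReal.rpow_lt_top_of_nonneg (by positivity) (ne_of_lt ?_)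
  have := (measurePreserving_pair (hE e he)).lintegral_comp
    (f := fun w : ℝ × ℝ => ‖W w.1 w.2‖ₑ ^ d) (hWm.enorm.pow_const d)
  exact this ▸ hsq

/-! ### The derivative of `G_W` and the function `T[Sym[W]]` -/

/-- Replacing coordinate `0` of a uniform point of the cube by an independent uniform variable
gives a uniform point of the cube. -/
lemma measurePreserving_update (v : ℕ) [NeZero v] :
    MeasurePreserving (fun w : ℝ × (Fin v → ℝ) => Function.update w.2 0 w.1)
      ((volume.restrict (Icc (0:ℝ) 1)).prod (unifCube v)) (unifCube v) := by
  have hm : Measurable (fun w : ℝ × (Fin v → ℝ) => Function.update w.2 0 w.1) := by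
    refine measurable_pi_lambda _ fun i => ?_
    by_cases hi : i = 0
    · subst hi; simpa using measurable_fst
    · simp only [Function.update_of_ne hi]
      exact (measurable_pi_apply i).comp measurable_snd
  refine ⟨hm, ?_⟩
  conv_rhs => rw [unifCube]
  refine (Measure.pi_eq fun s hs => ?_).symm
  rw [Measure.map_apply hm (MeasurableSet.univ_pi hs)]
  have : (fun w : ℝ × (Fin v → ℝ) => Function.update w.2 0 w.1) ⁻¹' univ.pi s =
      s 0 ×ˢ univ.pi fun i => if i = 0 then univ else s i := by
    ext ⟨x, z⟩
    simp only [mem_preimage, mem_prod, Set.mem_pi, mem_univ, true_imp_iff]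
    constructor
    · intro h
      refine ⟨by simpa using h 0, fun i => ?_⟩
      split_ifs with hi
      · trivial
      · simpa [Function.update_of_ne hi] using h i
    · rintro ⟨h0, h⟩ i
      by_cases hi : i = 0
      · subst hi; simpa using h0
      · have := h i
        rw [if_neg hi] at this
        simpa [Function.update_of_ne hi] using this
  rw [this, Measure.prod_prod, unifCube, Measure.pi_pi,
    ← Finset.mul_prod_erase _ _ (Finset.mem_univ (0 : Fin v)),
    ← Finset.mul_prod_erase _ _ (Finset.mem_univ (0 : Fin v)), if_pos rfl, measure_univ, one_mul]
  congr 1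
  refine Finset.prod_congr rfl fun i hi => ?_
  rw [if_neg (Finset.mem_erase.1 hi).1]

lemma measurePreserving_perm {v : ℕ} (σ : Equiv.Perm (Fin v)) :
    MeasurePreserving (fun (z : Fin v → ℝ) i => z (σ i)) (unifCube v) (unifCube v) := by
  have hm : Measurable (fun (z : Fin v → ℝ) i => z (σ i)) :=
    measurable_pi_lambda _ fun i => measurable_pi_apply _
  refine ⟨hm, ?_⟩
  conv_rhs => rw [unifCube]
  refine (Measure.pi_eq fun s hs => ?_).symm
  rw [Measure.map_apply hm (MeasurableSet.univ_pi hs)]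
  have : (fun (z : Fin v → ℝ) i => z (σ i)) ⁻¹' univ.pi s = univ.pi fun i => s (σ.symm i) := by
    ext z
    simp only [mem_preimage, Set.mem_pi, mem_univ, true_imp_iff]
    exact ⟨fun h i => by simpa using h (σ.symm i), fun h i => by simpa using h (σ i)⟩
  rw [this, unifCube, Measure.pi_pi]
  exact Equiv.prod_comp σ.symm (fun i => volume.restrict (Icc (0:ℝ) 1) (s i))

lemma integrable_symW {v : ℕ} {E : Finset (Fin v × Fin v)} {W : ℝ → ℝ → ℝ}
    (hint : Integrable (edgeProd E W) (unifCube v)) : Integrable (symW E W) (unifCube v) := by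
  unfold symW
  refine (integrable_finsetSum _ fun σ _ => ?_).const_mul _
  exact (measurePreserving_perm σ).integrable_comp_of_integrable hint

lemma integrable_mul_bdd {v : ℕ} {F : (Fin v → ℝ) → ℝ} (hF : Integrable F (unifCube v))
    {h : ℝ → ℝ} (hh : Measurable h) (hb : ∀ x, |h x| ≤ 1) (a : Fin v) :
    Integrable (fun z => F z * h (z a)) (unifCube v) :=
  hF.mul_bdd (c := 1) (hh.comp (measurable_pi_apply a)).aestronglyMeasurable
    (Eventually.of_forall fun _ => hb _)

lemma integrable_TSymW {v : ℕ} [NeZero v] {E : Finset (Fin v × Fin v)} {W : ℝ → ℝ → ℝ}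
    (hint : Integrable (edgeProd E W) (unifCube v)) :
    Integrable (TSymW E W) (volume.restrict (Icc (0:ℝ) 1)) :=
  ((measurePreserving_update v).integrable_comp_of_integrable
    (integrable_symW hint)).integral_prod_left

lemma integral_TSymW_mul {v : ℕ} [NeZero v] {E : Finset (Fin v × Fin v)} {W : ℝ → ℝ → ℝ}
    (hint : Integrable (edgeProd E W) (unifCube v))
    {h : ℝ → ℝ} (hh : Measurable h) (hb : ∀ x, |h x| ≤ 1) :
    ∫ x in Icc (0:ℝ) 1, TSymW E W x * h x = ∫ z, symW E W z * h (z 0) ∂unifCube v := by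
  have hmp := measurePreserving_update v
  have hI := integrable_mul_bdd (integrable_symW hint) hh hb 0
  have h1 := integral_prod _ (hmp.integrable_comp_of_integrable hI)
  have h2 := integral_map hmp.measurable.aemeasurable (f := fun z => symW E W z * h (z 0))
    (by rw [hmp.map_eq]; exact hI.aestronglyMeasurable)
  rw [hmp.map_eq] at h2
  rw [h2]
  simp only [Function.comp_def] at h1
  rw [h1]
  refine integral_congr_ae (Eventually.of_forall fun x => ?_)
  simp only [Function.update_self, integral_mul_const, TSymW]

/-- Integrating `T[Sym[W]]` against `h` computes, up to the factor `v`, the derivative of `G_W` at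
the constant `1` in direction `h`. The symmetrization is undone by averaging over the vertex placed
at coordinate `0`. -/
lemma card_mul_integral_TSymW_mul {v : ℕ} [NeZero v] {E : Finset (Fin v × Fin v)} {W : ℝ → ℝ → ℝ}
    (hint : Integrable (edgeProd E W) (unifCube v))
    {h : ℝ → ℝ} (hh : Measurable h) (hb : ∀ x, |h x| ≤ 1) :
    (v : ℝ) * ∫ x in Icc (0:ℝ) 1, TSymW E W x * h x =
      ∑ a, ∫ z, edgeProd E W z * h (z a) ∂unifCube v := by
  rw [integral_TSymW_mul hint hh hb]
  set φ : Fin v → ℝ := fun a => ∫ z, edgeProd E W z * h (z a) ∂unifCube v with hφ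
  have hσ : ∀ σ : Equiv.Perm (Fin v),
      ∫ z, edgeProd E W (fun i => z (σ i)) * h (z 0) ∂unifCube v = φ (σ.symm 0) := by
    intro σ
    have hmp := measurePreserving_perm σ
    have h2 := integral_map hmp.measurable.aemeasurable
      (f := fun z => edgeProd E W z * h (z (σ.symm 0)))
      (by rw [hmp.map_eq]; exact (integrable_mul_bdd hint hh hb _).aestronglyMeasurable)
    rw [hmp.map_eq] at h2
    simp only [hφ, h2, Equiv.apply_symm_apply]
  have h1 : ∫ z, symW E W z * h (z 0) ∂unifCube v =
      (v.factorial : ℝ)⁻¹ * ∑ σ : Equiv.Perm (Fin v), φ (σ.symm 0) := by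
    simp_rw [← hσ]
    rw [← integral_finsetSum, ← integral_const_mul]
    · refine integral_congr_ae (Eventually.of_forall fun z => ?_)
      simp only [symW, edgeProd, mul_assoc, Finset.sum_mul]
    · intro σ _
      exact integrable_mul_bdd
        ((measurePreserving_perm σ).integrable_comp_of_integrable hint) hh hb 0
  have h2 : ∀ b : Fin v, ∑ σ : Equiv.Perm (Fin v), φ (σ.symm b) =
      ∑ σ : Equiv.Perm (Fin v), φ (σ.symm 0) := by
    intro b
    refine Fintype.sum_equiv (Equiv.mulLeft (Equiv.swap 0 b)) _ _ fun σ => ?_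
    have : (Equiv.swap 0 b * σ).symm 0 = σ.symm b := by
      rw [Equiv.symm_apply_eq]; simp
    simp only [Equiv.coe_mulLeft, this]
  have h3 : (v : ℝ) * ∑ σ : Equiv.Perm (Fin v), φ (σ.symm 0) = v.factorial * ∑ a, φ a := by
    calc (v : ℝ) * ∑ σ : Equiv.Perm (Fin v), φ (σ.symm 0)
        = ∑ b : Fin v, ∑ σ : Equiv.Perm (Fin v), φ (σ.symm b) := by simp [h2]
      _ = ∑ σ : Equiv.Perm (Fin v), ∑ b : Fin v, φ (σ.symm b) := Finset.sum_comm
      _ = _ := by simp [Equiv.sum_comp, Fintype.card_perm]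
  rw [h1, mul_left_comm, h3, inv_mul_cancel_left₀]
  exact_mod_cast v.factorial_ne_zero

/-- The directional derivative of `G_W` at the constant function `c`. -/
lemma hasDerivAt_GW {v : ℕ} {E : Finset (Fin v × Fin v)} {W : ℝ → ℝ → ℝ}
    (hint : Integrable (edgeProd E W) (unifCube v))
    {h : ℝ → ℝ} (hh : Measurable h) (hb : ∀ x, |h x| ≤ 1) (c : ℝ) :
    HasDerivAt (fun ε => GW E W (fun x => c + ε * h x))
      (c ^ (v - 1) * ∑ a, ∫ z, edgeProd E W z * h (z a) ∂unifCube v) 0 := by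
  have hprod : ∀ (s : Finset (Fin v)) (ε : ℝ), Measurable fun z : Fin v → ℝ =>
      ∏ a ∈ s, (c + ε * h (z a)) := fun s ε =>
    Finset.measurable_prod _ fun a _ =>
      ((hh.comp (measurable_pi_apply a)).const_mul ε).const_add c
  have hbd : ∀ (s : Finset (Fin v)) (ε : ℝ), |ε| ≤ 1 → ∀ z : Fin v → ℝ,
      |∏ a ∈ s, (c + ε * h (z a))| ≤ (|c| + 1) ^ s.card := by
    intro s ε hε z
    rw [Finset.abs_prod]
    rw [← Finset.prod_const]
    refine Finset.prod_le_prod (fun a _ => abs_nonneg _) fun a _ => (abs_add_le _ _).trans ?_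
    rw [abs_mul]
    have := mul_le_one₀ hε (abs_nonneg _) (hb (z a))
    linarith
  have key := (hasDerivAt_integral_of_dominated_loc_of_deriv_le (μ := unifCube v) (x₀ := (0:ℝ))
    (s := Metric.ball 0 1)
    (F := fun ε z => edgeProd E W z * ∏ a, (c + ε * h (z a)))
    (F' := fun ε z => edgeProd E W z *
      ∑ a, (∏ b ∈ Finset.univ.erase a, (c + ε * h (z b))) * h (z a))
    (bound := fun z => |edgeProd E W z| * (v * (|c| + 1) ^ (v - 1)))
    (Metric.ball_mem_nhds _ one_pos)
    (Eventually.of_forall fun ε =>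
      hint.aestronglyMeasurable.mul (hprod _ ε).aestronglyMeasurable)
    (hint.mul_bdd (c := (|c| + 1) ^ (Finset.univ : Finset (Fin v)).card)
      (hprod _ 0).aestronglyMeasurable
      (Eventually.of_forall fun z => hbd _ 0 (by simp) z))
    (hint.aestronglyMeasurable.mul (Finset.measurable_sum _ fun a _ =>
      (hprod _ 0).mul (hh.comp (measurable_pi_apply a))).aestronglyMeasurable)
    (Eventually.of_forall fun z ε hε => ?_)
    (hint.abs.mul_const _)
    (Eventually.of_forall fun z ε hε => ?_)).2
  · have e : ∫ z, edgeProd E W z *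
        ∑ a, (∏ b ∈ Finset.univ.erase a, (c + 0 * h (z b))) * h (z a) ∂unifCube v =
        c ^ (v - 1) * ∑ a, ∫ z, edgeProd E W z * h (z a) ∂unifCube v := by
      rw [← integral_finsetSum _ fun a _ => integrable_mul_bdd hint hh hb a,
        ← integral_const_mul]
      refine integral_congr_ae (Eventually.of_forall fun z => ?_)
      simp only [zero_mul, add_zero, Finset.prod_const, Finset.card_erase_of_mem
        (Finset.mem_univ _), Finset.card_univ, Fintype.card_fin, Finset.mul_sum]
      exact Finset.sum_congr rfl fun a _ => by ring
    rw [e] at key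
    exact key
  · rw [norm_mul]
    refine mul_le_mul_of_nonneg_left ?_ (abs_nonneg _)
    have hε' : |ε| ≤ 1 := by simpa using (mem_ball_zero_iff.1 hε).le
    refine (norm_sum_le _ _).trans ((Finset.sum_le_card_nsmul _ _ ((|c| + 1) ^ (v - 1))
      fun a _ => ?_).trans (by simp))
    rw [norm_mul]
    have h1 := hbd (Finset.univ.erase a) ε hε' z
    rw [Finset.card_erase_of_mem (Finset.mem_univ _), Finset.card_univ, Fintype.card_fin] at h1
    exact (mul_le_mul h1 (hb _) (abs_nonneg _) (by positivity)).trans (mul_one _).le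
  · refine HasDerivAt.const_mul _ ?_
    have := HasDerivAt.fun_finsetProd (u := Finset.univ) (x := ε)
      (f := fun (a : Fin v) ε => c + ε * h (z a)) (f' := fun a => h (z a))
      fun a _ => by simpa using ((hasDerivAt_id ε).mul_const (h (z a))).const_add c
    simpa [smul_eq_mul] using this

/-! ### Optimality of constants -/

lemma GW_congr_ae {v : ℕ} (E : Finset (Fin v × Fin v)) (W : ℝ → ℝ → ℝ) {f g : ℝ → ℝ}
    (hfg : f =ᵐ[volume.restrict (Icc (0:ℝ) 1)] g) : GW E W f = GW E W g := by
  refine integral_congr_ae ?_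
  have : ∀ a : Fin v, ∀ᵐ z ∂unifCube v, f (z a) = g (z a) := fun a =>
    (Measure.quasiMeasurePreserving_eval
      (fun _ : Fin v => volume.restrict (Icc (0:ℝ) 1)) a).ae hfg
  filter_upwards [ae_all_iff.2 this] with z hz
  simp only [hz]

lemma GW_const {v : ℕ} (E : Finset (Fin v × Fin v)) (W : ℝ → ℝ → ℝ) (c : ℝ) :
    GW E W (fun _ => c) = (∫ z, edgeProd E W z ∂unifCube v) * c ^ v := by
  simp [GW, integral_mul_const]

lemma memL_of_bounded {μ : Measure ℝ} {p : ℝ} (hp : 0 ≤ p) {g : ℝ → ℝ} (hg : Measurable g)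
    (hN : ∀ x, g x ∈ Ndom μ) {B : ℝ} (hB : ∀ x, |g x| ≤ B) : MemL μ p g := by
  refine ⟨hg, fun x _ => subset_closure (hN x), ?_⟩
  refine lt_of_le_of_lt (lintegral_mono (g := fun _ => ENNReal.ofReal (B ^ p)) fun x =>
    ENNReal.ofReal_le_ofReal (Real.rpow_le_rpow (abs_nonneg _) (hB x) hp)) ?_
  simp

/-- If the constant `c` in the interior of the domain is optimal, then the first order condition in
the directions `1_A` forces `T[Sym[W]]` to be a.e. constant. -/
lemma TSymW_ae_const_of_mem_Ndom {μ : Measure ℝ} [IsProbabilityMeasure μ] (hND : Nondeg μ)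
    (hexp : ∀ t, Integrable (fun x => Real.exp (t * x)) μ) {v : ℕ} [NeZero v]
    {E : Finset (Fin v × Fin v)} {W : ℝ → ℝ → ℝ} {p : ℝ} (hp : 0 ≤ p)
    (hint : Integrable (edgeProd E W) (unifCube v)) {θ : ℝ} (hθ : θ ≠ 0) {c : ℝ} (hc : c ≠ 0)
    (hcN : c ∈ Ndom μ)
    (hmax : ∀ g : ℝ → ℝ, MemL μ p g → (∫⁻ x in Icc (0:ℝ) 1, gb μ (g x)) < ⊤ →
      objective μ E W θ g ≤ θ * GW E W (fun _ => c) - (gb μ c).toReal) :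
    ∃ k : ℝ, (fun x => TSymW E W x) =ᵐ[volume.restrict (Icc (0:ℝ) 1)] fun _ => k := by
  have hv0 : (v : ℝ) ≠ 0 := by exact_mod_cast NeZero.ne v
  set D := deriv (fun t => (gb μ t).toReal) c with hD
  have hI : HasDerivAt (fun t => (gb μ t).toReal) D c :=
    (differentiableAt_gb hND hexp hcN).hasDerivAt
  have hcv : c ^ (v - 1) ≠ 0 := pow_ne_zero _ hc
  -- first order condition in the direction of an indicator function
  have foc : ∀ A : Set ℝ, MeasurableSet A →
      θ * (c ^ (v - 1) * (v * ∫ x in A, TSymW E W x ∂volume.restrict (Icc (0:ℝ) 1))) =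
        D * (volume.restrict (Icc (0:ℝ) 1)).real A := by
    intro A hA
    set m := (volume.restrict (Icc (0:ℝ) 1)).real A with hm
    set m' := (volume.restrict (Icc (0:ℝ) 1)).real Aᶜ with hm'
    have hmm : m + m' = 1 := by rw [hm, hm', measureReal_add_measureReal_compl hA]; simp
    set h : ℝ → ℝ := A.indicator fun _ => 1 with hh
    have hhm : Measurable h := measurable_const.indicator hA
    have hhb : ∀ x, |h x| ≤ 1 := fun x => by
      by_cases hx : x ∈ A <;> simp [hh, hx]
    have hTh : ∫ x in A, TSymW E W x ∂volume.restrict (Icc (0:ℝ) 1) =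
        ∫ x in Icc (0:ℝ) 1, TSymW E W x * h x := by
      rw [← integral_indicator hA]
      refine integral_congr_ae (Eventually.of_forall fun x => ?_)
      by_cases hx : x ∈ A <;> simp [hh, hx]
    rw [hTh, card_mul_integral_TSymW_mul hint hhm hhb]
    have hlin : ∀ ε, ∫⁻ x in Icc (0:ℝ) 1, gb μ (c + ε * h x) =
        gb μ (c + ε) * volume.restrict (Icc (0:ℝ) 1) A +
          gb μ c * volume.restrict (Icc (0:ℝ) 1) Aᶜ := by
      intro ε
      rw [← lintegral_add_compl _ hA]
      congr 1
      · rw [setLIntegral_congr_fun (g := fun _ => gb μ (c + ε)) hA fun x hx => by simp [hh, hx],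
          setLIntegral_const]
      · rw [setLIntegral_congr_fun (g := fun _ => gb μ c) hA.compl fun x hx => by
          have hx' : x ∉ A := hx
          simp [hh, hx'], setLIntegral_const]
    have hnear : ∀ᶠ ε in nhds (0:ℝ), c + ε ∈ Ndom μ := by
      have : Tendsto (fun ε : ℝ => c + ε) (nhds 0) (nhds c) := by
        simpa using (continuous_const_add c).tendsto 0
      exact this (Ndom_mem_nhds hND hexp hcN)
    set Ψ : ℝ → ℝ := fun ε => θ * GW E W (fun x => c + ε * h x) -
      ((gb μ (c + ε)).toReal * m + (gb μ c).toReal * m') with hΨ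
    have hderiv : HasDerivAt Ψ
        (θ * (c ^ (v - 1) * ∑ a, ∫ z, edgeProd E W z * h (z a) ∂unifCube v) - D * m) 0 := by
      have h1 := (hasDerivAt_GW hint hhm hhb c).const_mul θ
      have h2 : HasDerivAt (fun ε => (gb μ (c + ε)).toReal) D 0 := by
        have := HasDerivAt.comp_const_add c (0:ℝ) (by simpa using hI)
        simpa using this
      exact h1.sub ((h2.mul_const m).add_const _)
    have hloc : IsLocalMax Ψ 0 := by
      filter_upwards [hnear] with ε hε
      have hfin : ∫⁻ x in Icc (0:ℝ) 1, gb μ (c + ε * h x) < ⊤ := by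
        rw [hlin]
        exact ENNReal.add_lt_top.2
          ⟨ENNReal.mul_lt_top (gb_ne_top hε).lt_top (measure_lt_top _ _),
            ENNReal.mul_lt_top (gb_ne_top hcN).lt_top (measure_lt_top _ _)⟩
      have hL : MemL μ p (fun x => c + ε * h x) := by
        refine memL_of_bounded hp ((hhm.const_mul ε).const_add c) (fun x => ?_)
          (B := |c| + |ε|) fun x => ?_
        · by_cases hx : x ∈ A <;> simp [hh, hx, hε, hcN]
        · refine (abs_add_le _ _).trans ?_
          rw [abs_mul]
          have := mul_le_of_le_one_right (abs_nonneg ε) (hhb x)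
          linarith
      have := hmax _ hL hfin
      rw [objective, hlin, ENNReal.toReal_add
        (ENNReal.mul_lt_top (gb_ne_top hε).lt_top (measure_lt_top _ _)).ne
        (ENNReal.mul_lt_top (gb_ne_top hcN).lt_top (measure_lt_top _ _)).ne,
        ENNReal.toReal_mul, ENNReal.toReal_mul] at this
      have h0 : Ψ 0 = θ * GW E W (fun _ => c) - (gb μ c).toReal := by
        simp only [hΨ, zero_mul, add_zero, ← mul_add, hmm, mul_one]
      rw [h0]
      exact this
    have := hloc.hasDerivAt_eq_zero hderiv
    linarith
  refine ⟨D / (θ * c ^ (v - 1) * v), ?_⟩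
  refine Integrable.ae_eq_of_forall_setIntegral_eq _ _ (integrable_TSymW hint)
    (integrable_const _) fun A hA _ => ?_
  have := foc A hA
  rw [setIntegral_const, smul_eq_mul, mul_div_assoc', eq_div_iff (by positivity)]
  linarith

/-- At an endpoint of `N` the entropy has infinite slope while `G_W` is Lipschitz along constants,
so moving the constant into `N` increases the objective. -/
lemma endpoint_not_max {μ : Measure ℝ} [IsProbabilityMeasure μ] (hND : Nondeg μ)
    (hexp : ∀ t, Integrable (fun x => Real.exp (t * x)) μ) {v : ℕ}
    {E : Finset (Fin v × Fin v)} {W : ℝ → ℝ → ℝ} {p : ℝ} (hp : 0 ≤ p) {θ c : ℝ}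
    (hcN : c ∉ Ndom μ) (hfin : gb μ c ≠ ⊤)
    (hmax : ∀ g : ℝ → ℝ, MemL μ p g → (∫⁻ x in Icc (0:ℝ) 1, gb μ (g x)) < ⊤ →
      objective μ E W θ g ≤ θ * GW E W (fun _ => c) - (gb μ c).toReal) : False := by
  have hm := strictMono_cgf' hND hexp
  have hcont : Continuous (cgf' μ) :=
    continuous_iff_continuousAt.2 fun t => (analyticAt_cgf hexp t).deriv.continuousAt
  set K := ∫ z, edgeProd E W z ∂unifCube v
  -- comparison of `c` with the constant `α'(s)`
  have hcmp : ∀ s, s * (c - cgf' μ s) ≤ θ * K * (c ^ v - cgf' μ s ^ v) := by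
    intro s
    have hs : cgf' μ s ∈ Ndom μ := ⟨s, rfl⟩
    have h1 := hmax (fun _ => cgf' μ s)
      (memL_of_bounded hp measurable_const (fun _ => hs) (fun _ => le_rfl))
      (by simpa using (gb_ne_top hs).lt_top)
    have h2 := gb_endpoint hND hexp hcN hfin s
    rw [objective, GW_const, GW_const] at h1
    simp only [lintegral_const, measure_univ, mul_one] at h1
    change θ * (K * _) - _ ≤ θ * (K * _) - _ at h1
    linarith
  obtain ⟨L, hL0, hL⟩ : ∃ L : ℝ, 0 ≤ L ∧ ∀ t ∈ uIcc (cgf' μ 0) c,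
      |θ * K * (c ^ v - t ^ v)| ≤ L * |c - t| := by
    set B := max |cgf' μ 0| |c|
    refine ⟨|θ * K| * (v * B ^ (v - 1)), by positivity, fun t ht => ?_⟩
    rw [abs_mul, mul_assoc]
    gcongr
    have htB : |t| ≤ B := by
      rcases le_total (cgf' μ 0) c with h | h
      · rw [uIcc_of_le h] at ht; exact abs_le_max_abs_abs ht.1 ht.2
      · rw [uIcc_of_ge h] at ht
        exact (abs_le_max_abs_abs ht.1 ht.2).trans (max_comm _ _).le
    have hcB : |c| ≤ B := le_max_right _ _
    calc |c ^ v - t ^ v| ≤ |c - t| * v * max |c| |t| ^ (v - 1) := abs_pow_sub_pow_le ..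
      _ ≤ |c - t| * v * B ^ (v - 1) := by gcongr; exact max_le hcB htB
      _ = v * B ^ (v - 1) * |c - t| := by ring
  -- `c` lies on one side of the interval `N`
  have hside : (∀ s, cgf' μ s < c) ∨ ∀ s, c < cgf' μ s := by
    by_contra! hcon
    obtain ⟨⟨s, hs⟩, ⟨t, ht⟩⟩ := hcon
    exact hcN (mem_range_of_exists_le_of_exists_ge hcont ⟨t, ht⟩ ⟨s, hs⟩)
  rcases hside with hlt | hgt
  · have h1 := hcmp (L + 1)
    have hlt1 := hlt (L + 1)
    have hmem : cgf' μ (L + 1) ∈ uIcc (cgf' μ 0) c := by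
      rw [uIcc_of_le (hlt 0).le]
      exact ⟨hm.monotone (by linarith), hlt1.le⟩
    have h2 := (le_abs_self _).trans (hL _ hmem)
    rw [abs_of_pos (sub_pos.2 hlt1)] at h2
    nlinarith
  · have h1 := hcmp (-(L + 1))
    have hgt1 := hgt (-(L + 1))
    have hmem : cgf' μ (-(L + 1)) ∈ uIcc (cgf' μ 0) c := by
      rw [uIcc_of_ge (hgt 0).le]
      exact ⟨hgt1.le, hm.monotone (by linarith)⟩
    have h2 := (le_abs_self _).trans (hL _ hmem)
    rw [abs_of_neg (sub_neg.2 hgt1)] at h2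
    nlinarith

/-- if `θ ≠ 0` and `T[Sym[W]]` is not a.e. constant, then no maximizer
of the variational problem is a.e. equal to a non-zero constant. -/
theorem statement1
    (μ : Measure ℝ) [IsProbabilityMeasure μ] (hND : Nondeg μ)
    (v : ℕ) [NeZero v] (hv : 2 ≤ v)
    (E : Finset (Fin v × Fin v)) (hE : ∀ e ∈ E, e.1 ≠ e.2)
    (p : ℝ) (hpv : (v : ℝ) ≤ p) (htail : TailCond μ p)
    (q : ℝ) (hq : 1 < q) (hpq : 1/p + 1/q ≤ 1)
    (W : ℝ → ℝ → ℝ) (hWm : Measurable fun z : ℝ × ℝ => W z.1 z.2)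
    (hWsym : ∀ x y, W x y = W y x)
    (hWnorm : eLpNorm (fun z : ℝ × ℝ => W z.1 z.2)
      (ENNReal.ofReal (q * (maxDeg E : ℝ))) unifSq < ⊤)
    (θ : ℝ) (hθ : θ ≠ 0)
    (hTnc : ¬ ∃ c : ℝ, (fun x => TSymW E W x)
      =ᵐ[volume.restrict (Icc (0:ℝ) 1)] fun _ => c) :
    ∀ f : ℝ → ℝ, IsMaximizer μ p E W θ f →
      ∀ c : ℝ, c ≠ 0 → ¬ (f =ᵐ[volume.restrict (Icc (0:ℝ) 1)] fun _ => c) := by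
  intro f hf c hc hfc
  have hv1 : (1:ℝ) ≤ p := by
    have : (2:ℝ) ≤ v := by exact_mod_cast hv
    linarith
  have hexp := integrable_exp_of_tail μ hv1 htail
  have hint := integrable_edgeProd E hE q hq W hWm hWnorm
  obtain ⟨hfL, hffin, hfmax⟩ := hf
  -- the maximality of `f` is the maximality of the constant `c`
  have hgbf : ∫⁻ x in Icc (0:ℝ) 1, gb μ (f x) = gb μ c := by
    rw [lintegral_congr_ae (g := fun _ => gb μ c)]
    · simp
    · filter_upwards [hfc] with x hx
      rw [hx]
  have hobj : objective μ E W θ f = θ * GW E W (fun _ => c) - (gb μ c).toReal := by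
    rw [objective, hgbf, GW_congr_ae E W hfc]
  rw [hgbf] at hffin
  rw [hobj] at hfmax
  by_cases hcN : c ∈ Ndom μ
  · exact hTnc (TSymW_ae_const_of_mem_Ndom hND hexp (by linarith) hint hθ hc hcN hfmax)
  · exact endpoint_not_max hND hexp (by linarith) hcN hffin.ne hfmax

end GibbsMulti
end
end

section
/- Let μ be a non-degenerate probability measure on ℝ, symmetric about 0, satisfying E_μ[exp(λ|X|^p)] < ∞ for all λ > 0 with some p ≥ 2, and assume α''(x) ≤ α''(y) whenever |x| ≥ |y|. For θ ≥ 0 and B ∈ ℝ define 𝔳_{θ,B}(x) := θx² + Bx − xβ(x) + α(β(x)) for x ∈ cl(N) (equivalently 𝔳_{θ,B}(x) = θx² + Bx − γ(β(x)), taking value −∞ where γ(β(x)) = ∞). If 2θ ≤ 1/α''(0) and B = 0, then 𝔳_{θ,0} has a unique global maximizer on cl(N), namely x = 0. -/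
/-!
The argument is a Legendre-duality comparison with the Gaussian. Write `σ² = α''(0)`.

* Since `α(0) = α'(0) = 0` and `α'' ≤ σ²`, the function `g(s) = σ² s² / 2 - α(s)` is convex with
  minimum `0` at `0`. If `g` vanished at another point it would vanish on an interval, hence
  everywhere by analyticity, and `μ` would be the centred Gaussian of variance `σ²`. That is
  excluded by non-degeneracy (if `σ² = 0`) and by finiteness of `E exp(λ X²)` for every `λ`
  (if `σ² > 0`). So `α(s) < σ² s² / 2` for `s ≠ 0` (`cgf_lt_quadratic`); together with `α ≥ 0`
  this also forces `σ² > 0`.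
* The Fenchel-Young inequality `s x - α(s) ≤ γ(β(x))` holds on `N` by convexity of `α`
  (`fenchel_young`), and at a point outside `N` because an atom of mass `m` at `x` gives
  `α(s) ≥ s x + log m` (`fenchel_young_atom`).
* Taking `s = x / σ²` gives `γ(β(x)) > x² / (2σ²) ≥ θ x²` for `x ≠ 0`, whereas `γ(β(0)) = 0`.
-/

open MeasureTheory Filter Set
open scoped ENNReal NNReal

noncomputable section

namespace GibbsMulti

/-- The function `𝔳_{θ,B}(x) = θx² + Bx − γ(β(x))`, with value `−∞` where `γ(β(x)) = ∞`,
as an extended-real valued function. -/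
def vFn (μ : Measure ℝ) (θ B : ℝ) (x : ℝ) : EReal :=
  ((θ * x ^ 2 + B * x : ℝ) : EReal) - ((gb μ x : ℝ≥0∞) : EReal)

/-! ### The tail condition -/

lemma sq_le_one_add_rpow {p : ℝ} (hp : 2 ≤ p) (x : ℝ) : x ^ 2 ≤ 1 + |x| ^ p := by
  have h0 : 0 ≤ |x| ^ p := Real.rpow_nonneg (abs_nonneg x) p
  rw [← sq_abs]
  rcases le_total |x| 1 with h | h
  · nlinarith [abs_nonneg x]
  · have := Real.rpow_le_rpow_of_exponent_le h hp
    rw [Real.rpow_two] at this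
    linarith

lemma integrable_exp_sq {μ : Measure ℝ} {p : ℝ} (hp : 2 ≤ p) (htail : TailCond μ p)
    {l : ℝ} (hl : 0 < l) : Integrable (fun x => Real.exp (l * x ^ 2)) μ := by
  refine ((htail l hl).const_mul (Real.exp l)).mono' (by fun_prop) (ae_of_all _ fun x => ?_)
  rw [Real.norm_eq_abs, Real.abs_exp, ← Real.exp_add]
  exact Real.exp_le_exp.2 (by nlinarith [sq_le_one_add_rpow hp x])

lemma integrable_exp_mul {μ : Measure ℝ} {p : ℝ} (hp : 2 ≤ p) (htail : TailCond μ p)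
    (t : ℝ) : Integrable (fun x => Real.exp (t * x)) μ := by
  refine ((integrable_exp_sq hp htail one_pos).const_mul (Real.exp (t ^ 2))).mono'
    (by fun_prop) (ae_of_all _ fun x => ?_)
  rw [Real.norm_eq_abs, Real.abs_exp, ← Real.exp_add]
  exact Real.exp_le_exp.2 (by nlinarith [sq_nonneg (t - x), sq_nonneg t, sq_nonneg x])

lemma not_integrable_exp_sq_gaussian {v : ℝ≥0} (hv : v ≠ 0) :
    ¬ Integrable (fun x => Real.exp ((1 / (2 * (v : ℝ))) * x ^ 2))
      (ProbabilityTheory.gaussianReal 0 v) := by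
  intro h
  rw [ProbabilityTheory.gaussianReal_of_var_ne_zero _ hv, integrable_withDensity_iff
    (ProbabilityTheory.measurable_gaussianPDF 0 v)
    (ae_of_all _ fun x => ProbabilityTheory.gaussianPDF_lt_top)] at h
  have hv' : (0 : ℝ) < v := by positivity
  -- The Gaussian density cancels the weight exactly, leaving a non-zero constant on `ℝ`.
  have hc : (fun x => Real.exp ((1 / (2 * (v : ℝ))) * x ^ 2) *
      (ProbabilityTheory.gaussianPDF 0 v x).toReal) =
      fun _ => (√(2 * Real.pi * v))⁻¹ := by
    funext x
    rw [ProbabilityTheory.toReal_gaussianPDF, ProbabilityTheory.gaussianPDFReal,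
      mul_left_comm, ← Real.exp_add]
    have : 1 / (2 * (v : ℝ)) * x ^ 2 + -(x - 0) ^ 2 / (2 * v) = 0 := by ring
    rw [this, Real.exp_zero, mul_one]
  rw [hc, integrable_const_iff] at h
  rcases h with h | h
  · have : 0 < (√(2 * Real.pi * v))⁻¹ := by positivity
    exact this.ne' h
  · simpa using h.measure_univ_lt_top

/-! ### Basic properties of `α` -/

lemma tangent_le {f : ℝ → ℝ} (hf : ConvexOn ℝ univ f) (hd : Differentiable ℝ f) (t s : ℝ) :
    f t + deriv f t * (s - t) ≤ f s := by
  rcases lt_trichotomy t s with h | rfl | h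
  · have := hf.deriv_le_slope (mem_univ t) (mem_univ s) h (hd t)
    rw [slope_def_field, le_div_iff₀ (by linarith)] at this
    linarith
  · simp
  · have := hf.slope_le_deriv (mem_univ s) (mem_univ t) h (hd t)
    rw [slope_def_field, div_le_iff₀ (by linarith)] at this
    linarith

section Basic

variable {μ : Measure ℝ} [IsProbabilityMeasure μ]

lemma cgf_zero : cgf μ 0 = 0 := by simp [cgf]

lemma cgf_neg (hsym : μ.map (fun x : ℝ => -x) = μ) (t : ℝ) : cgf μ (-t) = cgf μ t := by
  unfold cgf
  congr 1
  conv_rhs => rw [← hsym]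
  rw [integral_map (by fun_prop) (by fun_prop)]
  simp

lemma deriv_cgf_zero (hsym : μ.map (fun x : ℝ => -x) = μ) : deriv (cgf μ) 0 = 0 := by
  have h := deriv_comp_neg (cgf μ) 0
  simp only [cgf_neg hsym, neg_zero] at h
  linarith

lemma mem_interior (hint : ∀ t, Integrable (fun x : ℝ => Real.exp (t * x)) μ) (t : ℝ) :
    t ∈ interior (ProbabilityTheory.integrableExpSet id μ) := by
  have : ProbabilityTheory.integrableExpSet id μ = univ := eq_univ_of_forall hint
  simp [this]

lemma analytic_cgf (hint : ∀ t, Integrable (fun x : ℝ => Real.exp (t * x)) μ) :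
    AnalyticOnNhd ℝ (cgf μ) univ :=
  fun t _ => ProbabilityTheory.analyticAt_cgf (mem_interior hint t)

lemma differentiable_cgf (hint : ∀ t, Integrable (fun x : ℝ => Real.exp (t * x)) μ) :
    Differentiable ℝ (cgf μ) := fun t => (analytic_cgf hint t trivial).differentiableAt

lemma differentiable_deriv_cgf (hint : ∀ t, Integrable (fun x : ℝ => Real.exp (t * x)) μ) :
    Differentiable ℝ (deriv (cgf μ)) :=
  fun t => (analytic_cgf hint t trivial).deriv.differentiableAt

lemma deriv2_cgf_nonneg (hint : ∀ t, Integrable (fun x : ℝ => Real.exp (t * x)) μ) (t : ℝ) :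
    0 ≤ deriv (deriv (cgf μ)) t := by
  have h := ProbabilityTheory.variance_tilted_mul (mem_interior hint t)
  rw [iteratedDeriv_succ, iteratedDeriv_one] at h
  change _ = deriv (deriv (cgf μ)) t at h
  rw [← h]
  exact ProbabilityTheory.variance_nonneg _ _

lemma convex_cgf (hint : ∀ t, Integrable (fun x : ℝ => Real.exp (t * x)) μ) :
    ConvexOn ℝ univ (cgf μ) :=
  convexOn_univ_of_deriv2_nonneg (differentiable_cgf hint) (differentiable_deriv_cgf hint)
    (deriv2_cgf_nonneg hint)

lemma fenchel_young (hint : ∀ t, Integrable (fun x : ℝ => Real.exp (t * x)) μ) (t s : ℝ) :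
    s * cgf' μ t - cgf μ s ≤ gammaFn μ t := by
  have := tangent_le (convex_cgf hint) (differentiable_cgf hint) t s
  unfold gammaFn cgf'
  linarith

lemma fenchel_young_atom (hint : ∀ t, Integrable (fun x : ℝ => Real.exp (t * x)) μ)
    {x : ℝ} (hx : μ {x} ≠ 0) (s : ℝ) :
    s * x - cgf μ s ≤ - Real.log (μ {x}).toReal := by
  have hpos : 0 < (μ {x}).toReal := ENNReal.toReal_pos hx (measure_ne_top _ _)
  have h1 : (μ {x}).toReal * Real.exp (s * x) ≤ ∫ y, Real.exp (s * y) ∂μ := by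
    have := setIntegral_le_integral (s := {x}) (hint s) (ae_of_all _ fun y => (Real.exp_pos _).le)
    rwa [integral_singleton, smul_eq_mul] at this
  have h2 := Real.log_le_log (by positivity) h1
  rw [Real.log_mul hpos.ne' (Real.exp_pos _).ne', Real.log_exp] at h2
  unfold cgf
  linarith

/-! ### Strict sub-Gaussianity -/

/-- A measure with quadratic log-mgf is Gaussian, which the hypotheses exclude. -/
lemma not_quadratic (hND : Nondeg μ) {p : ℝ} (hp : 2 ≤ p) (htail : TailCond μ p)
    {v : ℝ≥0} (h : ∀ s, cgf μ s = v * s ^ 2 / 2) : False := by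
  have hint := integrable_exp_mul hp htail
  have hmgf : ProbabilityTheory.mgf id μ =
      ProbabilityTheory.mgf id (ProbabilityTheory.gaussianReal 0 v) := by
    rw [ProbabilityTheory.mgf_id_gaussianReal]
    funext s
    have hpos : 0 < ProbabilityTheory.mgf id μ s := ProbabilityTheory.mgf_pos (hint s)
    have hs : Real.log (ProbabilityTheory.mgf id μ s) = v * s ^ 2 / 2 := h s
    rw [zero_mul, zero_add, ← hs, Real.exp_log hpos]
  have hμ : μ = ProbabilityTheory.gaussianReal 0 v :=
    Measure.ext_of_complexMGF_id_eq (funext fun z =>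
      ProbabilityTheory.eqOn_complexMGF_of_mgf hmgf (mem_interior hint z.re))
  by_cases hv : v = 0
  · subst hv
    exact hND 0 (by rw [hμ, ProbabilityTheory.gaussianReal_zero_var])
  · have hv' : (0 : ℝ) < v := by positivity
    have := integrable_exp_sq hp htail (l := 1 / (2 * (v : ℝ))) (by positivity)
    rw [hμ] at this
    exact not_integrable_exp_sq_gaussian hv this

lemma cgf_lt_quadratic (hND : Nondeg μ) (hsym : μ.map (fun x : ℝ => -x) = μ)
    {p : ℝ} (hp : 2 ≤ p) (htail : TailCond μ p) {v : ℝ} (hv : 0 ≤ v)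
    (hle : ∀ x, deriv (deriv (cgf μ)) x ≤ v) {s : ℝ} (hs : s ≠ 0) :
    cgf μ s < v * s ^ 2 / 2 := by
  have hint := integrable_exp_mul hp htail
  set g : ℝ → ℝ := fun u => v * u ^ 2 / 2 - cgf μ u with hg
  have hg' : ∀ u, HasDerivAt g (v * u - deriv (cgf μ) u) u := fun u => by
    have h1 := (((hasDerivAt_id u).pow 2).const_mul v).div_const 2
    refine (h1.sub (differentiable_cgf hint u).hasDerivAt).congr_deriv ?_
    simp
    ring
  have hdg : deriv g = fun u => v * u - deriv (cgf μ) u := funext fun u => (hg' u).deriv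
  have hg'' : ∀ u, HasDerivAt (deriv g) (v - deriv (deriv (cgf μ)) u) u := fun u => by
    rw [hdg]
    refine (((hasDerivAt_id u).const_mul v).sub
      (differentiable_deriv_cgf hint u).hasDerivAt).congr_deriv ?_
    simp
  have hgd : Differentiable ℝ g := fun u => (hg' u).differentiableAt
  have hconv : ConvexOn ℝ univ g :=
    convexOn_univ_of_deriv2_nonneg hgd (fun u => (hg'' u).differentiableAt) fun u => by
      change 0 ≤ deriv (deriv g) u
      rw [(hg'' u).deriv]
      linarith [hle u]
  have hg0 : g 0 = 0 := by simp [hg, cgf_zero]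
  have hnonneg : ∀ u, 0 ≤ g u := fun u => by
    have := tangent_le hconv hgd 0 u
    rw [hg0, (hg' 0).deriv, deriv_cgf_zero hsym] at this
    simpa using this
  by_contra hcon
  have hgs : g s = 0 := le_antisymm (by simp only [hg]; linarith) (hnonneg s)
  -- By convexity `g` vanishes between `0` and `s`.
  have hseg : ∀ r ∈ Icc (0 : ℝ) 1, g (r * s) = 0 := fun r hr => by
    have := hconv.2 (mem_univ 0) (mem_univ s) (sub_nonneg.2 hr.2) hr.1 (by ring)
    simp only [smul_eq_mul, mul_zero, zero_add, hg0, hgs, add_zero] at this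
    exact le_antisymm this (hnonneg _)
  have hev : cgf μ =ᶠ[nhds (s / 2)] fun u => v * u ^ 2 / 2 := by
    have hc : ContinuousAt (fun u : ℝ => u / s) (s / 2) := by fun_prop
    have hm : Icc (0 : ℝ) 1 ∈ nhds (s / 2 / s) := by
      rw [div_div_cancel_left' hs]
      exact Icc_mem_nhds (by norm_num) (by norm_num)
    filter_upwards [hc hm] with u hu
    have := hseg (u / s) hu
    rw [div_mul_cancel₀ _ hs] at this
    simp only [hg] at this
    linarith
  have hall := (analytic_cgf hint).eq_of_eventuallyEq
    (g := fun u => v * u ^ 2 / 2) (fun u _ => by fun_prop) hev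
  exact not_quadratic hND hp htail (v := ⟨v, hv⟩) fun u => congrFun hall u

end Basic

/-- in the high-temperature regime `2θ ≤ 1/α''(0)` with `B = 0`,
`𝔳_{θ,0}` has the unique global maximizer `x = 0` on `cl(N)`. -/
theorem statement5
    (μ : Measure ℝ) [IsProbabilityMeasure μ] (hND : Nondeg μ)
    (hsym : μ.map (fun x : ℝ => -x) = μ)
    (p : ℝ) (hp : 2 ≤ p) (htail : TailCond μ p)
    (hmono : ∀ x y : ℝ, |y| ≤ |x| → deriv (deriv (cgf μ)) x ≤ deriv (deriv (cgf μ)) y)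
    (θ : ℝ) (hθ : 0 ≤ θ) (hθ2 : 2 * θ ≤ 1 / deriv (deriv (cgf μ)) 0) :
    (0 : ℝ) ∈ closure (Ndom μ) ∧
    (∀ x ∈ closure (Ndom μ), vFn μ θ 0 x ≤ vFn μ θ 0 0) ∧
    (∀ x ∈ closure (Ndom μ), x ≠ 0 → vFn μ θ 0 x < vFn μ θ 0 0) := by
  have hint := integrable_exp_mul hp htail
  set v := deriv (deriv (cgf μ)) 0 with hv
  have hv0 : 0 ≤ v := deriv2_cgf_nonneg hint 0
  have hlt : ∀ s : ℝ, s ≠ 0 → cgf μ s < v * s ^ 2 / 2 := fun s hs =>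
    cgf_lt_quadratic hND hsym hp htail hv0 (fun x => hmono x 0 (by simp)) hs
  have hcgf : ∀ s, 0 ≤ cgf μ s := fun s => by
    have := tangent_le (convex_cgf hint) (differentiable_cgf hint) 0 s
    rw [cgf_zero, deriv_cgf_zero hsym] at this
    linarith
  have hvpos : 0 < v := by
    have h1 := hlt 1 one_ne_zero
    have h2 := hcgf 1
    linarith
  have h0N : (0 : ℝ) ∈ Ndom μ := ⟨0, deriv_cgf_zero hsym⟩
  have hgb0 : gb μ 0 = 0 := by
    have hb : cgf' μ (betaInv μ 0) = 0 := Function.invFun_eq h0N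
    rw [gb, if_pos h0N, gammaFn, hb, ENNReal.ofReal_eq_zero]
    linarith [hcgf (betaInv μ 0)]
  have hv00 : vFn μ θ 0 0 = 0 := by simp [vFn, hgb0]
  -- The dual point `s = x / v` already beats `θ x²`.
  have hkey : ∀ x : ℝ, x ≠ 0 → θ * x ^ 2 < x / v * x - cgf μ (x / v) := fun x hx => by
    have h1 := hlt (x / v) (div_ne_zero hx hvpos.ne')
    have h2 : v * (x / v) ^ 2 / 2 = x / v * x - 1 / v * x ^ 2 / 2 := by
      field_simp
      ring
    have h3 : 2 * θ * x ^ 2 ≤ 1 / v * x ^ 2 := by gcongr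
    linarith
  have hfin : ∀ x c : ℝ, 0 ≤ θ * x ^ 2 → θ * x ^ 2 < c → gb μ x = ENNReal.ofReal c →
      vFn μ θ 0 x < 0 := fun x c h0 hc hgb => by
    rw [vFn, hgb, EReal.coe_ennreal_ofReal, max_eq_left (h0.trans hc.le), ← EReal.coe_sub]
    exact_mod_cast (by linarith : θ * x ^ 2 + 0 * x - c < 0)
  have hstrict : ∀ x : ℝ, x ≠ 0 → vFn μ θ 0 x < 0 := fun x hx => by
    have h0 : 0 ≤ θ * x ^ 2 := by positivity
    by_cases hxN : x ∈ Ndom μ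
    · have hb : cgf' μ (betaInv μ x) = x := Function.invFun_eq hxN
      have hfy := fenchel_young hint (betaInv μ x) (x / v)
      rw [hb] at hfy
      exact hfin x _ h0 ((hkey x hx).trans_le hfy) (if_pos hxN)
    · by_cases hat : μ {x} = 0
      · rw [vFn, gb, if_neg hxN, if_pos hat, EReal.coe_ennreal_top, EReal.sub_top]
        exact EReal.bot_lt_zero
      · exact hfin x _ h0 ((hkey x hx).trans_le (fenchel_young_atom hint hat _))
          (by rw [gb, if_neg hxN, if_neg hat])
  refine ⟨subset_closure h0N, fun x _ => ?_, fun x _ hx => ?_⟩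
  · rcases eq_or_ne x 0 with rfl | hx
    · exact le_rfl
    · exact hv00 ▸ (hstrict x hx).le
  · exact hv00 ▸ hstrict x hx

end GibbsMulti
end
end
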